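/- Royalty and other payment entries do not affect ownership or validity: for any ledger bc, agent a and asset α, Owns bc a α holds if and only if Owns (bc.filter isToken) a α holds, where bc.filter isToken is bc with all pay entries removed; moreover bc is valid if and only if bc.filter isToken is valid. -/

import Mathlib

/-- An entry of the blockchain ledger. -/
inductive Entry (Agent Asset : Type*) where
  | mint (a : Agent) (α : Asset)
  | transfer (old new : Agent) (α : Asset)
  | pay (b s : Agent) (c : ℝ)

variable {Agent Asset : Type*}

/-- If `e` is a token entry for asset `α`, the agent it assigns ownership of `α` to;
otherwise `none`. -/
def tokenOwner [DecidableEq Asset] (e : Entry Agent Asset) (α : Asset) : Option Agent :=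
  match e with
  | .mint a β => if β = α then some a else none
  | .transfer _ new β => if β = α then some new else none
  | .pay _ _ _ => none

/-- `Owns bc a α`: some position of `bc` holds a token entry for `α` assigning
ownership to `a`, and no later position holds a token entry for `α`. -/
def Owns [DecidableEq Asset] (bc : List (Entry Agent Asset)) (a : Agent) (α : Asset) : Prop :=
  ∃ i : Fin bc.length, tokenOwner (bc.get i) α = some a ∧
    ∀ j : Fin bc.length, (i : ℕ) < (j : ℕ) → tokenOwner (bc.get j) α = none

/-- The current owner of `α`, computed by a left fold over the ledger. -/
def currentOwner [DecidableEq Asset] (bc : List (Entry Agent Asset)) (α : Asset) : Option Agent :=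
  bc.foldl (fun acc e => match tokenOwner e α with | some a => some a | none => acc) none

/-- A ledger is valid iff each mint concerns an asset currently unowned and each
transfer is from the current owner; payments have no precondition. -/
def Valid [DecidableEq Asset] (bc : List (Entry Agent Asset)) : Prop :=
  ∀ i : Fin bc.length,
    match bc.get i with
    | .mint _ α => currentOwner (bc.take i) α = none
    | .transfer old _ α => currentOwner (bc.take i) α = some old
    | .pay _ _ _ => True

/-- The list, in ledger order, of agents assigned ownership of `α` by the token
entries for `α` in `bc`. -/
def ownerHistory [DecidableEq Asset] (bc : List (Entry Agent Asset)) (α : Asset) : List Agent :=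
  bc.filterMap (fun e => tokenOwner e α)

/-- `isToken e` holds iff `e` is a mint or a transfer. -/
def isToken : Entry Agent Asset → Bool
  | .mint _ _ => true
  | .transfer _ _ _ => true
  | .pay _ _ _ => false

/- The current owner of an asset is the last agent in its owner history. Ownership therefore depends
only on the histories, and these ignore payments. Whether an entry is admissible after a prefix
depends only on the current owners at that point; hence deleting payments, which are always
admissible, does not change validity. -/

section

variable [DecidableEq Asset]

theorem ownerHistory_filter_isToken (bc : List (Entry Agent Asset)) (α : Asset) :
    ownerHistory (bc.filter isToken) α = ownerHistory bc α := by
  rw [ownerHistory, List.filterMap_filter, ownerHistory]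
  congr! 2 with e
  cases e <;> rfl

theorem currentOwner_eq_getLast?_ownerHistory (bc : List (Entry Agent Asset)) (α : Asset) :
    currentOwner bc α = (ownerHistory bc α).getLast? := by
  induction bc using List.reverseRecOn with
  | nil => rfl
  | append_singleton bc e ih =>
    simp only [currentOwner, ownerHistory] at ih ⊢
    cases he : tokenOwner e α <;> simp [he, ih]

theorem currentOwner_filter_isToken (bc : List (Entry Agent Asset)) (α : Asset) :
    currentOwner (bc.filter isToken) α = currentOwner bc α := by
  simp only [currentOwner_eq_getLast?_ownerHistory, ownerHistory_filter_isToken]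

theorem owns_iff_exists_eq_append_cons {bc : List (Entry Agent Asset)} {a : Agent} {α : Asset} :
    Owns bc a α ↔ ∃ pre e post, bc = pre ++ e :: post ∧ tokenOwner e α = some a ∧
      ∀ x ∈ post, tokenOwner x α = none := by
  constructor
  · rintro ⟨i, hi, hlast⟩
    refine ⟨bc.take i, bc.get i, bc.drop (i + 1), by simp, hi, fun x hx => ?_⟩
    obtain ⟨k, hk, rfl⟩ := List.mem_drop_iff_getElem.mp hx
    exact hlast ⟨i + 1 + k, by omega⟩ (by simp only; omega)
  · rintro ⟨pre, e, post, rfl, he, hpost⟩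
    refine ⟨⟨pre.length, by simp⟩, by simpa using he, ?_⟩
    rintro ⟨j, hj⟩ (hlt : pre.length < j)
    obtain ⟨k, rfl⟩ := Nat.exists_eq_add_of_lt hlt
    have hk : k < post.length := by simpa [Nat.add_assoc] using hj
    have hget : (pre ++ e :: post).get ⟨pre.length + k + 1, hj⟩ = post[k] := by
      simp [Nat.add_assoc]
    rw [hget]
    exact hpost _ (List.getElem_mem hk)

theorem owns_iff_currentOwner_eq_some {bc : List (Entry Agent Asset)} {a : Agent} {α : Asset} :
    Owns bc a α ↔ currentOwner bc α = some a := by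
  rw [owns_iff_exists_eq_append_cons, currentOwner_eq_getLast?_ownerHistory, ownerHistory,
    List.getLast?_filterMap, List.findSome?_eq_some_iff]
  constructor
  · rintro ⟨pre, e, post, rfl, he, hpost⟩
    exact ⟨post.reverse, e, pre.reverse, by simp, he, by simpa using hpost⟩
  · rintro ⟨post, e, pre, hbc, he, hpost⟩
    exact ⟨pre.reverse, e, post.reverse, by simpa using congrArg List.reverse hbc, he,
      by simpa using hpost⟩

/-- The precondition for appending the entry `e` to the ledger `bc`, whatever the status of `bc`
itself: validity is admissibility of each entry after the prefix preceding it. -/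
def Entry.IsAdmissible (bc : List (Entry Agent Asset)) (e : Entry Agent Asset) : Prop :=
  match e with
  | .mint _ α => currentOwner bc α = none
  | .transfer old _ α => currentOwner bc α = some old
  | .pay _ _ _ => True

theorem Entry.isAdmissible_filter_isToken {bc : List (Entry Agent Asset)}
    {e : Entry Agent Asset} :
    IsAdmissible (bc.filter isToken) e ↔ IsAdmissible bc e := by
  cases e <;> simp only [IsAdmissible, currentOwner_filter_isToken]

theorem Entry.isAdmissible_of_not_isToken {bc : List (Entry Agent Asset)}
    {e : Entry Agent Asset} (he : ¬ isToken e) : IsAdmissible bc e := by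
  cases e <;> simp_all [isToken, IsAdmissible]

theorem valid_iff_forall_eq_append_cons {bc : List (Entry Agent Asset)} :
    Valid bc ↔ ∀ pre e post, bc = pre ++ e :: post → Entry.IsAdmissible pre e := by
  constructor
  · rintro h pre e post rfl
    have hpre : Entry.IsAdmissible ((pre ++ e :: post).take pre.length)
        ((pre ++ e :: post).get ⟨pre.length, by simp⟩) := h ⟨pre.length, by simp⟩
    simpa using hpre
  · exact fun h i => h (bc.take i) (bc.get i) (bc.drop (i + 1)) (by simp)

theorem valid_filter_isToken {bc : List (Entry Agent Asset)} :
    Valid (bc.filter isToken) ↔ Valid bc := by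
  simp only [valid_iff_forall_eq_append_cons]
  constructor
  · rintro h pre e post rfl
    by_cases he : isToken e
    · exact Entry.isAdmissible_filter_isToken.mp <|
        h (pre.filter isToken) e (post.filter isToken) (by simp [he])
    · exact Entry.isAdmissible_of_not_isToken he
  · intro h pre e post hbc
    obtain ⟨bc₁, bc₂, rfl, rfl, hbc₂⟩ := List.filter_eq_append_iff.mp hbc
    obtain ⟨pays, rest, rfl, hpays, -, -⟩ := List.filter_eq_cons_iff.mp hbc₂
    have hfilter : (bc₁ ++ pays).filter isToken = bc₁.filter isToken := by
      simpa using hpays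
    rw [← hfilter, Entry.isAdmissible_filter_isToken]
    exact h (bc₁ ++ pays) e rest (by simp)

end

theorem pay_entries_irrelevant [DecidableEq Asset]
    (bc : List (Entry Agent Asset)) (a : Agent) (α : Asset) :
    (Owns bc a α ↔ Owns (bc.filter isToken) a α) ∧
    (Valid bc ↔ Valid (bc.filter isToken)) := by
  refine ⟨?_, valid_filter_isToken.symm⟩
  rw [owns_iff_currentOwner_eq_some, owns_iff_currentOwner_eq_some, currentOwner_filter_isToken]
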